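/- Let λ, μ ⊢ n. The multiplicity ⟨φ_λ, χ_{SP_μ}⟩ of the Specht module SP_μ in the representation of S_n induced from the identity representation of the Young subgroup H(λ) is nonzero if and only if μ dominates λ (μ ⊵ λ). -/

import Mathlib

open scoped Classical

noncomputable section

open MvPolynomial

/-- `Dominates μ λ` : μ ⊵ λ in the dominance order (partial row sums of λ are ≤ those of μ). -/
def Dominates (mu lam : YoungDiagram) : Prop :=
  ∀ k : ℕ, ∑ i ∈ Finset.range k, lam.rowLen i ≤ ∑ i ∈ Finset.range k, mu.rowLen i

/-- Partial sums of the row lengths of a Young diagram. -/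
def rowPartialSum (lam : YoungDiagram) (i : ℕ) : ℕ :=
  ∑ j ∈ Finset.range i, lam.rowLen j

/-- The (0-indexed) row of the canonical tableau of shape `lam` containing the entry `m`
(the entries `0,…,n-1` fill the cells consecutively row by row). -/
def rowIndex (lam : YoungDiagram) (m : ℕ) : ℕ :=
  ((Finset.range (m + 1)).filter fun i => rowPartialSum lam (i + 1) ≤ m).card

/-- The Young subgroup `H(λ) ≤ S_n`: permutations preserving each row of the canonical
tableau of shape `λ`. -/
def youngH (n : ℕ) (lam : YoungDiagram) : Subgroup (Equiv.Perm (Fin n)) where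
  carrier := {g | ∀ m : Fin n, rowIndex lam (g m) = rowIndex lam m}
  one_mem' := by intro m; simp
  mul_mem' := by
    intro a b ha hb m
    have h1 := ha (b m)
    have h2 := hb m
    simpa [Equiv.Perm.mul_apply] using h1.trans h2
  inv_mem' := by
    intro a ha m
    simpa using (ha (a⁻¹ m)).symm

/-- The character of the representation induced from the trivial representation of a
subgroup `H`:  `φ(g) = (1/|H|) · #{x : x⁻¹ g x ∈ H}`. -/
noncomputable def indTrivChar {G : Type*} [Group G] (H : Subgroup G) (g : G) : ℂ :=
  (Nat.card H : ℂ)⁻¹ * (Nat.card {x : G // x⁻¹ * g * x ∈ H} : ℂ)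

/-- The inner product of class functions on a finite group:
`⟨a,b⟩ = (1/|G|) Σ_g a g * conj (b g)`. -/
noncomputable def innerChar {G : Type*} [Group G] [Fintype G] (a b : G → ℂ) : ℂ :=
  (Fintype.card G : ℂ)⁻¹ * ∑ g : G, a g * (starRingEnd ℂ) (b g)

/-- The Specht polynomial of a bijective filling `T` of the cells of `lam` by `0,…,n-1`:
the product over all pairs of cells in the same column (the first strictly above the
second) of the differences of the corresponding variables — i.e. the product of the
column Vandermonde determinants. -/
noncomputable def spechtPoly (n : ℕ) (lam : YoungDiagram) (T : lam.cells ≃ Fin n) :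
    MvPolynomial (Fin n) ℂ :=
  ∏ p ∈ Finset.univ.filter
      (fun p : lam.cells × lam.cells =>
        (p.1 : ℕ × ℕ).2 = (p.2 : ℕ × ℕ).2 ∧ (p.1 : ℕ × ℕ).1 < (p.2 : ℕ × ℕ).1),
    (X (T p.1) - X (T p.2))

/-- The Specht module: the linear span of all Specht polynomials of shape `lam`. -/
noncomputable def spechtModule (n : ℕ) (lam : YoungDiagram) :
    Submodule ℂ (MvPolynomial (Fin n) ℂ) :=
  Submodule.span ℂ (Set.range (spechtPoly n lam))

lemma rename_spechtPoly (n : ℕ) (lam : YoungDiagram) (T : lam.cells ≃ Fin n)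
    (g : Equiv.Perm (Fin n)) :
    MvPolynomial.rename g (spechtPoly n lam T) = spechtPoly n lam (T.trans g) := by
  simp only [spechtPoly, map_prod, map_sub, MvPolynomial.rename_X]
  rfl

lemma spechtModule_invariant (n : ℕ) (lam : YoungDiagram) (g : Equiv.Perm (Fin n)) :
    ∀ p ∈ spechtModule n lam,
      (MvPolynomial.rename (σ := Fin n) (R := ℂ) g).toLinearMap p ∈ spechtModule n lam := by
  intro p hp
  induction hp using Submodule.span_induction with
  | mem x hx =>
      obtain ⟨T, rfl⟩ := hx
      simp only [AlgHom.toLinearMap_apply, rename_spechtPoly]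
      exact Submodule.subset_span ⟨_, rfl⟩
  | zero => simp
  | add x y _ _ hx hy => rw [map_add]; exact add_mem hx hy
  | smul a x _ hx => rw [map_smul]; exact Submodule.smul_mem _ _ hx

/-- The character of the representation of the symmetric group on the Specht module
(permutations act on polynomials by permuting the variables). -/
noncomputable def spechtChar (n : ℕ) (lam : YoungDiagram) (g : Equiv.Perm (Fin n)) : ℂ :=
  LinearMap.trace ℂ (spechtModule n lam)
    (LinearMap.restrict (MvPolynomial.rename (σ := Fin n) (R := ℂ) g).toLinearMap
      (spechtModule_invariant n lam g))

lemma frob_aux {G V : Type*} [Group G] [Fintype G] [AddCommGroup V] [Module ℂ V]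
    [FiniteDimensional ℂ V] (ρ : Representation ℂ G V) (H : Subgroup G) :
    (starRingEnd ℂ) (innerChar (indTrivChar H) ρ.character) =
      (Module.finrank ℂ (Representation.invariants
        (MonoidHom.comp ρ H.subtype : Representation ℂ H V)) : ℂ) := by
  have hH : (Nat.card H : ℂ) ≠ 0 := by exact_mod_cast Nat.card_pos.ne'
  have hG : (Fintype.card G : ℂ) ≠ 0 := by exact_mod_cast Fintype.card_pos.ne'
  have : Invertible (Nat.card H : ℂ) := invertibleOfNonzero hH
  rw [← Representation.card_inv_mul_sum_char_eq_finrank]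
  have h1 : ∀ g : G, (Nat.card {x : G // x⁻¹ * g * x ∈ H} : ℂ)
      = ∑ x : G, if x⁻¹ * g * x ∈ H then (1:ℂ) else 0 := by
    intro g
    rw [Nat.card_eq_fintype_card, Fintype.card_subtype]
    simp
  have h2 : ∑ g : G, (Nat.card {x : G // x⁻¹ * g * x ∈ H} : ℂ) * ρ.character g
      = (Fintype.card G : ℂ) * ∑ h : H, ρ.character h := by
    simp_rw [h1, Finset.sum_mul]
    rw [Finset.sum_comm]
    have h3 : ∀ x : G, ∑ g : G, (if x⁻¹ * g * x ∈ H then (1:ℂ) else 0) * ρ.character g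
        = ∑ h : H, ρ.character h := by
      intro x
      have := (Fintype.sum_equiv (MulAut.conj x).toEquiv
        (fun g => (if g ∈ H then (1:ℂ) else 0) * ρ.character g)
        (fun g => (if x⁻¹ * g * x ∈ H then (1:ℂ) else 0) * ρ.character g) (by
          intro g
          have e : x⁻¹ * (x * g * x⁻¹) * x = g := by group
          change _ = (if x⁻¹ * (x * g * x⁻¹) * x ∈ H then (1:ℂ) else 0) * ρ.character (x * g * x⁻¹)
          rw [e, Representation.char_conj]))
      rw [← this]
      simp only [ite_mul, one_mul, zero_mul]
      rw [← Finset.sum_filter]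
      exact (Finset.sum_subtype _ (by simp) _)
    rw [Finset.sum_congr rfl fun x _ => h3 x]
    simp
  have h4 : (starRingEnd ℂ) (innerChar (indTrivChar H) ρ.character)
      = (Fintype.card G : ℂ)⁻¹ * ((Nat.card H : ℂ)⁻¹ *
        ∑ g : G, (Nat.card {x : G // x⁻¹ * g * x ∈ H} : ℂ) * ρ.character g) := by
    simp [innerChar, indTrivChar, Finset.mul_sum, mul_assoc]
  rw [h4, h2]
  have h5 : ∑ h : H, Representation.character (MonoidHom.comp ρ H.subtype : Representation ℂ H V) h
      = ∑ h : H, ρ.character h := rfl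
  rw [h5]
  field_simp

def spechtRep (n : ℕ) (mu : YoungDiagram) :
    Representation ℂ (Equiv.Perm (Fin n)) (spechtModule n mu) where
  toFun g := LinearMap.restrict (MvPolynomial.rename (σ := Fin n) (R := ℂ) g).toLinearMap
      (spechtModule_invariant n mu g)
  map_one' := by
    ext v : 2
    simp [LinearMap.restrict_apply, MvPolynomial.rename_id_apply]
  map_mul' g h := by
    ext v : 2
    simp [LinearMap.restrict_apply, MvPolynomial.rename_rename]

lemma spechtRep_coe (n : ℕ) (mu : YoungDiagram) (g : Equiv.Perm (Fin n)) (v : spechtModule n mu) :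
    (spechtRep n mu g v : MvPolynomial (Fin n) ℂ) = MvPolynomial.rename g v.1 := rfl

lemma spechtChar_eq (n : ℕ) (mu : YoungDiagram) : spechtChar n mu = (spechtRep n mu).character := rfl

instance spechtFin (n : ℕ) (mu : YoungDiagram) : FiniteDimensional ℂ (spechtModule n mu) :=
  FiniteDimensional.span_of_finite ℂ (Set.finite_range _)

/-- the sign lemma -/
lemma spechtPoly_swap (n : ℕ) (mu : YoungDiagram) (T : mu.cells ≃ Fin n) (c d : mu.cells)
    (hcol : c.1.2 = d.1.2) (hlt : c.1.1 < d.1.1) :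
    MvPolynomial.rename (Equiv.swap (T c) (T d)) (spechtPoly n mu T) = - spechtPoly n mu T := by
  set τ := Equiv.swap (T c) (T d) with hτ
  set σ := Equiv.swap c d with hσ
  have hTσ : ∀ e, τ (T e) = T (σ e) := by
    intro e
    exact (T.injective.map_swap c d e).symm
  have hcσ : ∀ e, (σ e).1.2 = e.1.2 := by
    intro e
    rw [hσ, Equiv.swap_apply_def]
    split_ifs with h1 h2
    · rw [h1, hcol]
    · rw [h2, hcol]
    · rfl
  set P : Finset (mu.cells × mu.cells) := Finset.univ.filter
      (fun p : mu.cells × mu.cells =>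
        (p.1 : ℕ × ℕ).2 = (p.2 : ℕ × ℕ).2 ∧ (p.1 : ℕ × ℕ).1 < (p.2 : ℕ × ℕ).1) with hP
  have hS : spechtPoly n mu T = ∏ p ∈ P, (X (T p.1) - X (T p.2)) := rfl
  -- full product
  set D : MvPolynomial (Fin n) ℂ := ∏ p ∈ Finset.univ.filter
      (fun p : mu.cells × mu.cells => p.1.1.2 = p.2.1.2 ∧ p.1.1.1 ≠ p.2.1.1),
      (X (T p.1) - X (T p.2)) with hD
  have hDS : D = (-1) ^ P.card * (spechtPoly n mu T) ^ 2 := by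
    have hsplit : Finset.univ.filter
      (fun p : mu.cells × mu.cells => p.1.1.2 = p.2.1.2 ∧ p.1.1.1 ≠ p.2.1.1)
      = P ∪ P.map (Equiv.prodComm _ _).toEmbedding := by
      ext ⟨e, f⟩
      simp [hP]
      omega
    have hdisj : Disjoint P (P.map (Equiv.prodComm _ _).toEmbedding) := by
      rw [Finset.disjoint_left]
      rintro ⟨e, f⟩
      simp [hP]
      omega
    rw [hD, hsplit, Finset.prod_union hdisj, Finset.prod_map, ← hS]
    have : ∏ p ∈ P, ((X (T ((Equiv.prodComm _ _).toEmbedding p).1) : MvPolynomial (Fin n) ℂ)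
        - X (T ((Equiv.prodComm _ _).toEmbedding p).2))
        = (-1) ^ P.card * spechtPoly n mu T := by
      rw [hS, ← Finset.prod_const, ← Finset.prod_mul_distrib]
      refine Finset.prod_congr rfl fun p _ => ?_
      simp
    rw [this]
    ring
  have hDτ : MvPolynomial.rename τ D = D := by
    rw [hD]
    simp only [map_prod, map_sub, MvPolynomial.rename_X, hTσ]
    refine Finset.prod_equiv (Equiv.prodCongr σ σ) ?_ ?_
    · rintro ⟨e, f⟩
      have h1 : e.1.2 = f.1.2 → (e.1.1 ≠ f.1.1 ↔ e ≠ f) := by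
        intro h; rw [not_iff_not, Subtype.ext_iff, Prod.ext_iff]; tauto
      have h2 : (σ e).1.2 = (σ f).1.2 → ((σ e).1.1 ≠ (σ f).1.1 ↔ σ e ≠ σ f) := by
        intro h; rw [not_iff_not, Subtype.ext_iff (a1 := σ e), Prod.ext_iff]; tauto
      rw [hcσ, hcσ] at h2
      have h3 : σ e ≠ σ f ↔ e ≠ f := σ.injective.ne_iff
      simp only [Finset.mem_filter, Finset.mem_univ, true_and, Equiv.prodCongr_apply, Prod.map, hcσ]
      tauto
    · intro p _
      rfl
  have hsq : (MvPolynomial.rename τ (spechtPoly n mu T)) ^ 2 = (spechtPoly n mu T) ^ 2 := by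
    rw [hDS] at hDτ
    simp only [map_mul, map_pow, map_neg, map_one] at hDτ
    exact mul_left_cancel₀ (pow_ne_zero _ (by simp)) hDτ
  rcases sq_eq_sq_iff_eq_or_eq_neg.mp hsq with h | h
  · exfalso
    have hcd : (c, d) ∈ P := by simp [hP, hcol, hlt]
    rw [hS, ← Finset.mul_prod_erase P _ hcd] at h
    set Q : MvPolynomial (Fin n) ℂ := ∏ p ∈ P.erase (c, d), (X (T p.1) - X (T p.2)) with hQ
    have hne : (X (T c) - X (T d) : MvPolynomial (Fin n) ℂ) ≠ 0 := by
      rw [sub_ne_zero]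
      intro h
      have := T.injective (MvPolynomial.X_injective h)
      rw [this] at hlt
      exact lt_irrefl _ hlt
    have h' : MvPolynomial.rename τ Q = - Q := by
      simp only [map_mul, map_sub, MvPolynomial.rename_X] at h
      rw [hτ, Equiv.swap_apply_left, Equiv.swap_apply_right, ← hτ] at h
      apply mul_left_cancel₀ hne
      linear_combination -h
    let y : Fin n → ℂ := fun m => if m = T d then ((T c : ℕ) : ℂ) else ((m : ℕ) : ℂ)
    have hy : ∀ m m', y m = y m' → m ≠ m' → (m = T c ∧ m' = T d) ∨ (m = T d ∧ m' = T c) := by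
      intro m m' h1 h2
      simp only [y] at h1
      split_ifs at h1 with h3 h4 h4
      · exact absurd (h3.trans h4.symm) h2
      · right; exact ⟨h3, (Fin.ext (by exact_mod_cast h1)).symm⟩
      · left; exact ⟨(Fin.ext (by exact_mod_cast h1)), h4⟩
      · exact absurd (Fin.ext (by exact_mod_cast h1)) h2
    have hyτ : y ∘ τ = y := by
      funext m
      have h1 : y (T c) = y (T d) := by
        simp only [y, if_true]
        split_ifs <;> rfl
      simp only [Function.comp, hτ, Equiv.swap_apply_def]
      split_ifs with h2 h3
      · rw [h2, h1]
      · rw [h3, h1]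
      · rfl
    have h6 := congrArg (MvPolynomial.eval y) h'
    rw [MvPolynomial.eval_rename, hyτ, map_neg, eq_neg_iff_add_eq_zero, ← two_mul] at h6
    have h7 : MvPolynomial.eval y Q = 0 := by simpa using h6
    rw [hQ, map_prod, Finset.prod_eq_zero_iff] at h7
    obtain ⟨⟨e, f⟩, hef, h8⟩ := h7
    simp only [map_sub, MvPolynomial.eval_X, sub_eq_zero] at h8
    simp only [Finset.mem_erase, hP, Finset.mem_filter, Finset.mem_univ, true_and] at hef
    rcases hy _ _ h8 (by intro h; have := T.injective h; rw [this] at hef; omega) with ⟨h9, h10⟩ | ⟨h9, h10⟩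
    · exact hef.1 (Prod.ext (T.injective h9) (T.injective h10))
    · have h11 := T.injective h9
      have h12 := T.injective h10
      rw [h11, h12] at hef
      omega
  · exact h

lemma mult_iff_exists (n : ℕ) (lam mu : YoungDiagram) :
    innerChar (indTrivChar (youngH n lam)) (spechtChar n mu) ≠ 0 ↔
    ∃ T : mu.cells ≃ Fin n, ∀ c d : mu.cells, c.1.2 = d.1.2 → c.1.1 < d.1.1 →
      rowIndex lam (T c) ≠ rowIndex lam (T d) := by
  set H := youngH n lam with hH
  let ρ : Representation ℂ H (spechtModule n mu) := MonoidHom.comp (spechtRep n mu) H.subtype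
  have hρ : ∀ (h : H) (v : spechtModule n mu),
    (ρ h v : MvPolynomial (Fin n) ℂ) = MvPolynomial.rename h.1 v.1 := fun _ _ => rfl
  have h0 : innerChar (indTrivChar H) (spechtChar n mu) ≠ 0 ↔
      Module.finrank ℂ ρ.invariants ≠ 0 := by
    rw [spechtChar_eq, ← (map_ne_zero (starRingEnd ℂ)), frob_aux]
    exact Nat.cast_ne_zero
  have h00 : Module.finrank ℂ ρ.invariants ≠ 0 ↔ ∃ v ∈ ρ.invariants, v ≠ 0 := by
    rw [Ne, Submodule.finrank_eq_zero, Submodule.eq_bot_iff]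
    push Not
    rfl
  rw [h0, h00]
  let A : spechtModule n mu →ₗ[ℂ] spechtModule n mu := ∑ h : H, ρ h
  have hA : ∀ v, A v = ∑ h : H, ρ h v := fun v => by simp [A]
  constructor
  · rintro ⟨v, hv, hv0⟩
    by_contra hcon
    push Not at hcon
    have hAS : ∀ T : mu.cells ≃ Fin n, A ⟨spechtPoly n mu T, Submodule.subset_span ⟨T, rfl⟩⟩ = 0 := by
      intro T
      obtain ⟨c, d, hcol, hlt, hr⟩ := hcon T
      have hmem : Equiv.swap (T c) (T d) ∈ H := by
        intro m
        rw [Equiv.swap_apply_def]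
        split_ifs with h1 h2
        · rw [h1, hr]
        · rw [h2, hr]
        · rfl
      set w : spechtModule n mu := ⟨spechtPoly n mu T, Submodule.subset_span ⟨T, rfl⟩⟩ with hw
      have h1 : ρ ⟨_, hmem⟩ w = - w := by
        apply Subtype.ext
        rw [hρ]
        exact spechtPoly_swap n mu T c d hcol hlt
      have h2 : A (ρ ⟨_, hmem⟩ w) = A w := by
        rw [hA, hA]
        refine Fintype.sum_equiv (Equiv.mulRight ⟨_, hmem⟩) _ _ fun h => ?_
        simp [map_mul]
      rw [h1, map_neg, neg_eq_iff_add_eq_zero, ← two_smul ℂ] at h2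
      simpa using h2
    have hA0 : A = 0 := by
      have key : ∀ p (hp : p ∈ spechtModule n mu), A ⟨p, hp⟩ = 0 := by
        intro p hp
        induction hp using Submodule.span_induction with
        | mem x hx => obtain ⟨T, rfl⟩ := hx; exact hAS T
        | zero => exact map_zero A
        | add x y hx hy h1 h2 =>
          have := map_add A ⟨x, hx⟩ ⟨y, hy⟩
          rw [h1, h2, add_zero] at this
          exact this
        | smul a x hx h1 =>
          have := map_smul A a ⟨x, hx⟩
          rw [h1, smul_zero] at this
          exact this
      ext ⟨p, hp⟩ : 1
      exact key p hp
    have h3 : A v = (Fintype.card H : ℂ) • v := by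
      rw [hA]
      have : ∀ h : H, ρ h v = v := hv
      simp only [this, Finset.sum_const, Finset.card_univ]
      rw [Nat.cast_smul_eq_nsmul]
    rw [hA0, LinearMap.zero_apply, eq_comm, smul_eq_zero] at h3
    rcases h3 with h3 | h3
    · exact Fintype.card_ne_zero (α := H) (by exact_mod_cast h3)
    · exact hv0 h3
  · rintro ⟨T, hT⟩
    set w : spechtModule n mu := ⟨spechtPoly n mu T, Submodule.subset_span ⟨T, rfl⟩⟩ with hw
    refine ⟨A w, ?_, ?_⟩
    · intro g
      rw [hA, map_sum]
      refine Fintype.sum_equiv (Equiv.mulLeft g) _ _ fun h => ?_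
      simp [map_mul]
    · intro h0
      let y : Fin n → ℂ := fun m => (rowIndex lam m : ℂ)
      have hy : ∀ h : H, y ∘ h.1 = y := by
        intro h
        funext m
        have := h.2 m
        simp only [y, Function.comp, this]
      have h1 : MvPolynomial.eval y (A w).1 = (Fintype.card H : ℂ) * MvPolynomial.eval y (spechtPoly n mu T) := by
        rw [hA, Submodule.coe_sum, map_sum]
        simp only [hρ, MvPolynomial.eval_rename, hy]
        simp [hw]
      rw [h0] at h1
      simp only [ZeroMemClass.coe_zero, map_zero] at h1
      rcases mul_eq_zero.mp h1.symm with h3 | h3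
      · exact Fintype.card_ne_zero (α := H) (by exact_mod_cast h3)
      · rw [spechtPoly, map_prod, Finset.prod_eq_zero_iff] at h3
        obtain ⟨⟨c, d⟩, hm, h4⟩ := h3
        simp only [Finset.mem_filter, Finset.mem_univ, true_and] at hm
        simp only [map_sub, MvPolynomial.eval_X, sub_eq_zero, y] at h4
        exact hT c d hm.1 hm.2 (by exact_mod_cast h4)

lemma rowPartialSum_eq (lam : YoungDiagram) (k : ℕ) :
    rowPartialSum lam k = (lam.cells.filter (fun c => c.1 < k)).card := by
  rw [Finset.card_eq_sum_card_fiberwise (f := Prod.fst) (t := Finset.range k)]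
  · refine Finset.sum_congr rfl fun i hi => ?_
    rw [YoungDiagram.rowLen_eq_card]
    congr 1
    ext c
    simp only [YoungDiagram.row, Finset.mem_filter, Finset.mem_range] at hi ⊢
    constructor
    · rintro ⟨h1, h2⟩
      exact ⟨⟨h1, by omega⟩, h2⟩
    · rintro ⟨⟨h1, _⟩, h2⟩
      exact ⟨h1, h2⟩
  · intro c hc
    simpa using (Finset.mem_filter.mp hc).2

lemma rowPartialSum_mono (lam : YoungDiagram) : Monotone (rowPartialSum lam) := by
  intro a b h
  exact Finset.sum_le_sum_of_subset (Finset.range_mono h)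

lemma rowPartialSum_le (lam : YoungDiagram) (k : ℕ) : rowPartialSum lam k ≤ lam.card := by
  rw [rowPartialSum_eq]
  exact Finset.card_filter_le _ _

lemma rowPartialSum_eq_card (lam : YoungDiagram) (i : ℕ) (h : lam.rowLen i = 0) :
    rowPartialSum lam i = lam.card := by
  rw [rowPartialSum_eq, Finset.filter_true_of_mem]
  rintro ⟨r, j⟩ hc
  by_contra hr
  have h1 : j < lam.rowLen r := YoungDiagram.mem_iff_lt_rowLen.mp ((YoungDiagram.mem_cells _).mp hc)
  have h2 := lam.rowLen_anti i r (by simpa using hr)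
  omega

lemma le_rowPartialSum (lam : YoungDiagram) (k : ℕ) (h : rowPartialSum lam k < lam.card) :
    k ≤ rowPartialSum lam k := by
  have h1 : ∀ i ∈ Finset.range k, 1 ≤ lam.rowLen i := by
    intro i hi
    by_contra h0
    have h2 := rowPartialSum_eq_card lam i (by omega)
    have h3 := rowPartialSum_mono lam (Finset.mem_range.mp hi).le
    omega
  have := Finset.sum_le_sum h1
  simpa [rowPartialSum] using this

lemma le_rowIndex_iff (lam : YoungDiagram) (m k : ℕ) (hm : m < lam.card) :
    k ≤ rowIndex lam m ↔ rowPartialSum lam k ≤ m := by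
  constructor
  · intro h
    by_contra hlt
    push Not at hlt
    have hk : k ≠ 0 := by rintro rfl; simp [rowPartialSum] at hlt
    have hsub : ((Finset.range (m + 1)).filter fun i => rowPartialSum lam (i + 1) ≤ m)
        ⊆ Finset.range (k - 1) := by
      intro i hi
      have h1 := (Finset.mem_filter.mp hi).2
      rw [Finset.mem_range]
      by_contra h2
      have := rowPartialSum_mono lam (show k ≤ i + 1 by omega)
      omega
    have := Finset.card_le_card hsub
    rw [Finset.card_range] at this
    unfold rowIndex at h
    omega
  · intro h
    have hk := le_rowPartialSum lam k (by omega)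
    have hsub : Finset.range k ⊆
        ((Finset.range (m + 1)).filter fun i => rowPartialSum lam (i + 1) ≤ m) := by
      intro i hi
      rw [Finset.mem_range] at hi
      have := rowPartialSum_mono lam (show i + 1 ≤ k by omega)
      rw [Finset.mem_filter, Finset.mem_range]
      omega
    have := Finset.card_le_card hsub
    rwa [Finset.card_range] at this

lemma card_rowIndex_lt (n : ℕ) (lam : YoungDiagram) (hn : lam.card = n) (k : ℕ) :
    (Finset.univ.filter fun m : Fin n => rowIndex lam m < k).card = rowPartialSum lam k := by
  have h1 : (Finset.univ.filter fun m : Fin n => rowIndex lam m < k)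
      = Finset.univ.filter fun m : Fin n => (m : ℕ) < rowPartialSum lam k := by
    ext m
    have := le_rowIndex_iff lam m k (by rw [hn]; exact m.2)
    simp only [Finset.mem_filter, Finset.mem_univ, true_and]
    omega
  have h2 := rowPartialSum_le lam k
  rw [h1, Fin.card_filter_val_lt]
  omega

lemma card_rowIndex_eq (n : ℕ) (lam : YoungDiagram) (hn : lam.card = n) (i : ℕ) :
    (Finset.univ.filter fun m : Fin n => rowIndex lam m = i).card = lam.rowLen i := by
  have h1 := card_rowIndex_lt n lam hn i
  have h2 := card_rowIndex_lt n lam hn (i + 1)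
  have h3 : (Finset.univ.filter fun m : Fin n => rowIndex lam m < i + 1)
      = (Finset.univ.filter fun m : Fin n => rowIndex lam m < i) ∪
        (Finset.univ.filter fun m : Fin n => rowIndex lam m = i) := by
    ext m
    simp only [Finset.mem_filter, Finset.mem_univ, true_and, Finset.mem_union]
    omega
  rw [h3, Finset.card_union_of_disjoint] at h2
  · simp only [rowPartialSum, Finset.sum_range_succ] at h1 h2
    omega
  · rw [Finset.disjoint_left]
    intro m
    simp only [Finset.mem_filter, Finset.mem_univ, true_and]
    omega

lemma card_cells_lt (mu : YoungDiagram) (k : ℕ) :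
    (Finset.univ.filter fun c : mu.cells => c.1.1 < k).card = rowPartialSum mu k := by
  rw [rowPartialSum_eq, ← Finset.card_map (Function.Embedding.subtype _)]
  congr 1
  ext c
  simp [and_comm]

lemma col_count_le (mu : YoungDiagram) (s : mu.cells → ℕ)
    (hs : ∀ c d : mu.cells, c.1.2 = d.1.2 → s c = s d → c = d) (k : ℕ) :
    (Finset.univ.filter fun c : mu.cells => s c < k).card ≤ rowPartialSum mu k := by
  rw [← card_cells_lt]
  rw [Finset.card_eq_sum_card_fiberwise (f := fun c : mu.cells => c.1.2)
    (t := Finset.univ.image fun c : mu.cells => c.1.2) (fun c _ => by simp),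
    Finset.card_eq_sum_card_fiberwise (s := Finset.univ.filter fun c : mu.cells => c.1.1 < k)
    (f := fun c : mu.cells => c.1.2)
    (t := Finset.univ.image fun c : mu.cells => c.1.2) (fun c _ => by simp)]
  refine Finset.sum_le_sum fun j _ => ?_
  rcases le_or_gt k (mu.colLen j) with hk | hk
  · trans k
    · conv_rhs => rw [← Finset.card_range k]
      refine Finset.card_le_card_of_injOn s ?_ ?_
      · intro c hc
        simp only [Finset.coe_filter, Finset.mem_filter, Finset.mem_univ, true_and, Set.mem_ofPred_eq] at hc
        simpa using hc.1
      · intro c hc d hd h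
        simp only [Finset.coe_filter, Finset.mem_filter, Finset.mem_univ, true_and, Set.mem_ofPred_eq] at hc hd
        exact hs c d (hc.2.trans hd.2.symm) h
    · have hmem : ∀ i : Fin k, ((i : ℕ), j) ∈ mu.cells := fun i => by
        rw [YoungDiagram.mem_cells, YoungDiagram.mem_iff_lt_colLen]
        exact lt_of_lt_of_le i.2 hk
      conv_lhs => rw [← Fintype.card_fin k, ← Finset.card_univ]
      refine Finset.card_le_card_of_injOn (fun i : Fin k => (⟨((i : ℕ), j), hmem i⟩ : mu.cells)) ?_ ?_
      · intro i _
        simp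
      · intro i _ i' _ h
        simpa [Fin.ext_iff] using h
  · refine Finset.card_le_card ?_
    intro c hc
    simp only [Finset.mem_filter, Finset.mem_univ, true_and] at hc ⊢
    refine ⟨?_, hc.2⟩
    have h1 : (c.1.1, c.1.2) ∈ mu := (YoungDiagram.mem_cells _).mp c.2
    rw [YoungDiagram.mem_iff_lt_colLen, hc.2] at h1
    omega

def cnt {mu : YoungDiagram} (s : mu.cells → ℕ) (i : ℕ) : ℕ :=
  (Finset.univ.filter fun c => s c = i).card

lemma cnt_update {mu : YoungDiagram} (s : mu.cells → ℕ) (c : mu.cells) (k : ℕ) (j : ℕ) :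
    cnt (Function.update s c k) j + (if s c = j then 1 else 0)
      = cnt s j + (if k = j then 1 else 0) := by
  simp only [cnt, Finset.card_filter]
  rw [← Finset.add_sum_erase _ _ (Finset.mem_univ c),
    ← Finset.add_sum_erase Finset.univ (fun d => if s d = j then 1 else 0) (Finset.mem_univ c)]
  have : ∑ d ∈ Finset.univ.erase c, (if Function.update s c k d = j then 1 else 0)
      = ∑ d ∈ Finset.univ.erase c, (if s d = j then 1 else 0) := by
    refine Finset.sum_congr rfl fun d hd => ?_
    rw [Function.update_of_ne (Finset.ne_of_mem_erase hd)]
  rw [this, Function.update_self]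
  ring

lemma exists_filling_aux (mu lam : YoungDiagram) (N : ℕ) (hN : ∀ i, N ≤ i → lam.rowLen i = 0)
    (hsum : ∑ i ∈ Finset.range N, lam.rowLen i = mu.card) (D : ℕ) :
    ∀ s : mu.cells → ℕ, (∀ c d : mu.cells, c.1.2 = d.1.2 → s c = s d → c = d) →
    (∀ c, s c < N) →
    (∀ K, ∑ i ∈ Finset.range K, lam.rowLen i ≤ ∑ i ∈ Finset.range K, cnt s i) →
    (∑ i ∈ Finset.range N, (lam.rowLen i - cnt s i) = D) →
    ∃ s : mu.cells → ℕ, (∀ c d : mu.cells, c.1.2 = d.1.2 → s c = s d → c = d) ∧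
      ∀ i, cnt s i = lam.rowLen i := by
  induction D using Nat.strong_induction_on with
  | _ D ih =>
  intro s hs hsN hdom hD
  have htot : ∑ i ∈ Finset.range N, cnt s i = mu.card := by
    have := Finset.card_eq_sum_card_fiberwise (s := (Finset.univ : Finset mu.cells)) (f := s)
      (t := Finset.range N) (fun c _ => by simpa using hsN c)
    rw [Finset.card_univ, Fintype.card_coe] at this
    exact this.symm
  by_cases hex : ∃ k, cnt s k < lam.rowLen k
  · let k := Nat.find hex
    have hk : cnt s k < lam.rowLen k := Nat.find_spec hex
    have hmin : ∀ j < k, lam.rowLen j ≤ cnt s j := fun j hj => by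
      have := Nat.find_min hex hj
      omega
    have hkN : k < N := by
      by_contra h
      have := hN k (by omega)
      omega
    obtain ⟨i, hik, hi⟩ : ∃ i < k, lam.rowLen i < cnt s i := by
      by_contra hcon
      push Not at hcon
      have h1 := hdom (k + 1)
      rw [Finset.sum_range_succ, Finset.sum_range_succ] at h1
      have h2 : ∑ i ∈ Finset.range k, cnt s i ≤ ∑ i ∈ Finset.range k, lam.rowLen i :=
        Finset.sum_le_sum fun j hj => hcon j (Finset.mem_range.mp hj)
      omega
    have hanti := lam.rowLen_anti i k hik.le
    obtain ⟨c, hci, hck⟩ : ∃ c, s c = i ∧ ∀ d : mu.cells, d.1.2 = c.1.2 → s d ≠ k := by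
      by_contra hcon
      push Not at hcon
      choose! f hf1 hf2 using hcon
      have : cnt s i ≤ cnt s k := by
        refine Finset.card_le_card_of_injOn f ?_ ?_
        · intro c hc
          have hc : s c = i := by simpa using hc
          simpa using hf2 c hc
        · intro c hc d hd h
          have hc : s c = i := by simpa using hc
          have hd : s d = i := by simpa using hd
          refine hs c d ?_ (hc.trans hd.symm)
          rw [← hf1 c hc, ← hf1 d hd, h]
      omega
    have hcu := cnt_update s c k
    rw [hci] at hcu
    refine ih _ ?_ (Function.update s c k) ?_ ?_ ?_ rfl
    · rw [← hD]
      refine Finset.sum_lt_sum ?_ ⟨k, Finset.mem_range.mpr hkN, ?_⟩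
      · intro j _
        have := hcu j
        split_ifs at this with h1 h2 h2
        · omega
        · subst h1; omega
        · omega
        · omega
      · have := hcu k
        rw [if_neg hik.ne, if_pos rfl] at this
        omega
    · intro a b hab h
      by_cases ha : a = c
      · by_cases hb : b = c
        · rw [ha, hb]
        · rw [ha, Function.update_self, Function.update_of_ne hb] at h
          exact absurd h.symm (hck b (by rw [← hab, ha]))
      · by_cases hb : b = c
        · rw [hb, Function.update_self, Function.update_of_ne ha] at h
          exact absurd h (hck a (by rw [hab, hb]))
        · rw [Function.update_of_ne ha, Function.update_of_ne hb] at h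
          exact hs a b hab h
    · intro a
      by_cases ha : a = c
      · rw [ha, Function.update_self]; exact hkN
      · rw [Function.update_of_ne ha]; exact hsN a
    · intro K
      have h1 : ∑ j ∈ Finset.range K, cnt (Function.update s c k) j + (if i < K then 1 else 0)
          = ∑ j ∈ Finset.range K, cnt s j + (if k < K then 1 else 0) := by
        have := Finset.sum_congr (rfl : Finset.range K = Finset.range K) fun j _ => hcu j
        rw [Finset.sum_add_distrib, Finset.sum_add_distrib] at this
        simpa using this
      have h2 := hdom K
      split_ifs at h1 with h3 h4 h4
      · omega
      · have : ∑ j ∈ Finset.range K, lam.rowLen j < ∑ j ∈ Finset.range K, cnt s j :=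
          Finset.sum_lt_sum (fun j hj => hmin j (by rw [Finset.mem_range] at hj; omega))
            ⟨i, Finset.mem_range.mpr h3, hi⟩
        omega
      · omega
      · omega
  · push Not at hex
    refine ⟨s, hs, fun i => ?_⟩
    by_cases hi : i < N
    · have := (Finset.sum_eq_sum_iff_of_le (s := Finset.range N) (fun j _ => hex j)).mp
        (hsum.trans htot.symm) i (Finset.mem_range.mpr hi)
      exact this.symm
    · rw [hN i (by omega), cnt, Finset.card_eq_zero, Finset.filter_eq_empty_iff]
      intro c _ h
      have := hsN c
      omega

lemma exists_filling (mu lam : YoungDiagram) (hcard : mu.card = lam.card)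
    (hdom : Dominates mu lam) :
    ∃ s : mu.cells → ℕ, (∀ c d : mu.cells, c.1.2 = d.1.2 → s c = s d → c = d) ∧
      ∀ i, cnt s i = lam.rowLen i := by
  have hlam : ∀ i, lam.colLen 0 ≤ i → lam.rowLen i = 0 := by
    intro i hi
    by_contra h
    have : (i, 0) ∈ lam := YoungDiagram.mem_iff_lt_rowLen.mpr (by omega)
    rw [YoungDiagram.mem_iff_lt_colLen] at this
    omega
  have hcnt : ∀ i, cnt (fun c : mu.cells => c.1.1) i = mu.rowLen i := by
    intro i
    rw [cnt, YoungDiagram.rowLen_eq_card, ← Finset.card_map (Function.Embedding.subtype _)]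
    congr 1
    ext c
    simp [YoungDiagram.row]
    exact and_comm
  refine exists_filling_aux mu lam (lam.colLen 0 + mu.colLen 0)
    (fun i hi => hlam i (by omega)) ?_ _ (fun c => c.1.1) ?_ ?_ ?_ rfl
  · rw [hcard]
    exact rowPartialSum_eq_card lam _ (hlam _ (by omega))
  · intro c d h1 h2
    exact Subtype.ext (Prod.ext h2 h1)
  · intro c
    have h1 : (c.1.1, c.1.2) ∈ mu := (YoungDiagram.mem_cells _).mp c.2
    rw [YoungDiagram.mem_iff_lt_colLen] at h1
    have := mu.colLen_anti 0 c.1.2 (Nat.zero_le _)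
    omega
  · intro K
    simp only [hcnt]
    exact hdom K

/-- The multiplicity of the Specht module `SP_μ` in the representation of `S_n` induced
from the identity representation of the Young subgroup `H(λ)` is nonzero iff `μ ⊵ λ`. -/
theorem mult_ne_zero_iff_dominates (n : ℕ) (lam mu : YoungDiagram)
    (hlam : lam.card = n) (hmu : mu.card = n) :
    innerChar (indTrivChar (youngH n lam)) (spechtChar n mu) ≠ 0 ↔ Dominates mu lam := by
  rw [mult_iff_exists]
  constructor
  · rintro ⟨T, hT⟩ k
    have h1 := col_count_le mu (fun c => rowIndex lam (T c)) (by
      intro c d h1 h2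
      rcases lt_trichotomy c.1.1 d.1.1 with h | h | h
      · exact absurd h2 (hT c d h1 h)
      · exact Subtype.ext (Prod.ext h h1)
      · exact absurd h2.symm (hT d c h1.symm h)) k
    have h2 := card_rowIndex_lt n lam hlam k
    have h3 : (Finset.univ.filter fun c : mu.cells => rowIndex lam (T c) < k).card
        = (Finset.univ.filter fun m : Fin n => rowIndex lam m < k).card :=
      Finset.card_equiv T (by simp)
    rw [h3, h2] at h1
    exact h1
  · intro hdom
    obtain ⟨s, hs, hcnt⟩ := exists_filling mu lam (hmu.trans hlam.symm) hdom
    have e : ∀ i : ℕ, Nonempty ({c : mu.cells // s c = i} ≃ {m : Fin n // rowIndex lam m = i}) := by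
      intro i
      refine Fintype.card_eq.mp ?_
      rw [Fintype.card_subtype, Fintype.card_subtype, card_rowIndex_eq n lam hlam i]
      exact hcnt i
    let T : mu.cells ≃ Fin n := Equiv.ofFiberEquiv (f := s)
      (g := fun m : Fin n => rowIndex lam m) (fun i => (e i).some)
    have hT : ∀ c, rowIndex lam (T c) = s c := fun c =>
      Equiv.ofFiberEquiv_map (f := s) (g := fun m : Fin n => rowIndex lam m) (fun i => (e i).some) c
    refine ⟨T, fun c d h1 h2 h3 => ?_⟩
    rw [hT, hT] at h3
    have := hs c d h1 h3
    rw [this] at h2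
    exact lt_irrefl _ h2

end
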